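/- arXiv:2307.14494 — 2 statements merged into one kernel-verified Lean document; each statement's English description precedes it below -/
import Mathlib

section
/- Let m, n be natural numbers with 1 ≤ n ≤ m - 1, let z = (z_1, ..., z_m) and w = (w_1, ..., w_m) be vectors in ℂ^m, and let Z = diag(z_1, ..., z_m). Suppose q_0, q_1, ..., q_n ∈ ℂ^m and scalars α_1, ..., α_n ∈ ℂ and β_1, ..., β_n ∈ ℂ satisfy: (i) [q_j, q_j]_w = 1 for all 0 ≤ j ≤ n; (ii) α_{j+1} = [q_j, Z q_j]_w for all 0 ≤ j ≤ n-1; (iii) the three-term recurrence Z q_j = β_j q_{j-1} + α_{j+1} q_j + β_{j+1} q_{j+1} holds for all 0 ≤ j ≤ n-1, with the conventions q_{-1} = 0 and β_0 = 0; and (iv) β_j ≠ 0 for all 1 ≤ j ≤ n. Then the vectors are complex orthogonal: [q_i, q_j]_w = 0 for all 0 ≤ i, j ≤ n with i ≠ j. -/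
open Matrix BigOperators

/-!
Pairing the recurrence for `A q_k` with `q_i` gives
`β_{k+1} [q_i, q_{k+1}] = [q_i, A q_k] - β_k [q_i, q_{k-1}] - α_{k+1} [q_i, q_k]`, so by induction
on `k` it suffices to see that the right-hand side vanishes for `i ≤ k`. For `i = k` this is the
choice of `α_{k+1}`. For `i < k`, self-adjointness moves `A` onto `q_i`, and the recurrence for
`A q_i` leaves only `β_{i+1} [q_k, q_{i+1}]`, which equals `β_k [q_i, q_{k-1}]`: both are `β_k` if
`i + 1 = k`, and both are `0` otherwise.
-/

section LanczosProcess

variable {R M : Type*} [CommRing R] [AddCommMonoid M] [Module R M]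

/-- `n` steps of the symmetric Lanczos process for an endomorphism `A` with respect to a bilinear
form `B`, called the complex orthogonalization process when `R = ℂ`: the vectors `q 0, …, q n` are
normalized and satisfy a three-term recurrence whose diagonal coefficients are `B (q j) (A (q j))`.
At `j = 0` the truncated index `j - 1` is harmless, since `β 0 = 0`. -/
structure IsLanczosProcess (B : LinearMap.BilinForm R M) (A : Module.End R M) (q : ℕ → M)
    (α β : ℕ → R) (n : ℕ) : Prop where
  beta_zero : β 0 = 0
  apply_self : ∀ j ≤ n, B (q j) (q j) = 1
  alpha_succ : ∀ j < n, α (j + 1) = B (q j) (A (q j))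
  map_eq : ∀ j < n,
    A (q j) = β j • q (j - 1) + α (j + 1) • q j + β (j + 1) • q (j + 1)

namespace IsLanczosProcess

variable {B : LinearMap.BilinForm R M} {A : Module.End R M} {q : ℕ → M} {α β : ℕ → R} {i k n : ℕ}

theorem apply_map (h : IsLanczosProcess B A q α β n) (hk : k < n) (v : M) :
    B v (A (q k)) =
      β k * B v (q (k - 1)) + α (k + 1) * B v (q k) + β (k + 1) * B v (q (k + 1)) := by
  simp only [h.map_eq k hk, map_add, map_smul, smul_eq_mul]

theorem beta_mul_apply_pred_self (h : IsLanczosProcess B A q α β n)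
    (ho : (Set.Iic k).Pairwise fun i j => B (q i) (q j) = 0) :
    β k * B (q k) (q (k - 1)) = 0 := by
  cases k with
  | zero => rw [h.beta_zero, zero_mul]
  | succ k =>
    rw [Nat.add_sub_cancel, ho Set.self_mem_Iic k.le_succ k.succ_ne_self, mul_zero]

theorem beta_mul_apply_pred_of_lt (h : IsLanczosProcess B A q α β n)
    (ho : (Set.Iic k).Pairwise fun i j => B (q i) (q j) = 0) (hik : i < k) (hkn : k ≤ n) :
    β k * B (q i) (q (k - 1)) = β (i + 1) * B (q k) (q (i + 1)) := by
  obtain rfl | hlt := (Nat.succ_le_of_lt hik).eq_or_lt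
  · rw [Nat.succ_sub_one, h.apply_self i (by lia), h.apply_self (i + 1) hkn]
  · have hleft : B (q i) (q (k - 1)) = 0 := ho hik.le (Nat.sub_le k 1) (by lia)
    have hright : B (q k) (q (i + 1)) = 0 := ho Set.self_mem_Iic hik hlt.ne'
    rw [hleft, hright, mul_zero, mul_zero]

theorem apply_map_of_lt (h : IsLanczosProcess B A q α β n)
    (ho : (Set.Iic k).Pairwise fun i j => B (q i) (q j) = 0) (hik : i < k) (hkn : k ≤ n) :
    B (q k) (A (q i)) = β (i + 1) * B (q k) (q (i + 1)) := by
  have hpred : B (q k) (q (i - 1)) = 0 := ho Set.self_mem_Iic (by grind) (by lia)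
  have hself : B (q k) (q i) = 0 := ho Set.self_mem_Iic hik.le hik.ne'
  rw [h.apply_map (hik.trans_le hkn), hpred, hself, mul_zero, mul_zero, zero_add, zero_add]

theorem beta_mul_apply_succ_eq_zero (h : IsLanczosProcess B A q α β n) (hB : B.IsSymm)
    (hA : B.IsSelfAdjoint A) (ho : (Set.Iic k).Pairwise fun i j => B (q i) (q j) = 0)
    (hik : i ≤ k) (hkn : k < n) : β (k + 1) * B (q i) (q (k + 1)) = 0 := by
  have hrec := h.apply_map hkn (q i)
  obtain rfl | hlt := hik.eq_or_lt
  · rw [← h.alpha_succ i hkn, h.apply_self i hkn.le, h.beta_mul_apply_pred_self ho] at hrec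
    linear_combination -hrec
  · have hswap : B (q i) (A (q k)) = B (q k) (A (q i)) := by rw [← hA, hB.eq]
    have hself : B (q i) (q k) = 0 := ho hik Set.self_mem_Iic hlt.ne
    rw [hswap, h.apply_map_of_lt ho hlt hkn.le, h.beta_mul_apply_pred_of_lt ho hlt hkn.le,
      hself] at hrec
    linear_combination -hrec

end IsLanczosProcess

theorem complex_orthogonalization_orthogonal_general {B : LinearMap.BilinForm R M}
    {A : Module.End R M} {q : ℕ → M} {α β : ℕ → R} {n : ℕ} (hB : B.IsSymm)
    (hA : B.IsSelfAdjoint A) (h : IsLanczosProcess B A q α β n)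
    (hβ : ∀ j, 1 ≤ j → j ≤ n → IsLeftRegular (β j)) :
    (Set.Iic n).Pairwise fun i j => B (q i) (q j) = 0 := by
  suffices ∀ k ≤ n, (Set.Iic k).Pairwise fun i j => B (q i) (q j) = 0 from this n le_rfl
  intro k hk
  induction k with
  | zero => simp only [← bot_eq_zero, Set.Iic_bot, Set.pairwise_singleton]
  | succ k ih =>
    have ho := ih (Nat.le_of_succ_le hk)
    have hnew : ∀ i ≤ k, B (q i) (q (k + 1)) = 0 := fun i hi =>
      (hβ (k + 1) k.succ_pos hk).mul_left_eq_zero_iff.mp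
        (h.beta_mul_apply_succ_eq_zero hB hA ho hi hk)
    rw [← Order.succ_eq_add_one, Order.Iic_succ, Set.pairwise_insert]
    exact ⟨ho, fun i hi _ => ⟨(hB.eq _ _).trans (hnew i hi), hnew i hi⟩⟩

end LanczosProcess

section WeightedBilinForm

variable {R ι : Type*} [CommSemiring R] [Fintype ι]

/-- The bilinear form `[u, v]_w` on `ι → R` with weight vector `w`. -/
def weightedBilinForm (w : ι → R) : LinearMap.BilinForm R (ι → R) :=
  LinearMap.mk₂ R (fun u v => ∑ i, w i * u i * v i)
    (fun u u' v => by simp only [Pi.add_apply, mul_add, add_mul, Finset.sum_add_distrib])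
    (fun c u v => by
      simp only [Pi.smul_apply, smul_eq_mul, Finset.mul_sum, mul_assoc, mul_left_comm])
    (fun u v v' => by simp only [Pi.add_apply, mul_add, Finset.sum_add_distrib])
    (fun c u v => by
      simp only [Pi.smul_apply, smul_eq_mul, Finset.mul_sum, mul_left_comm])

theorem weightedBilinForm_apply (w u v : ι → R) :
    weightedBilinForm w u v = ∑ i, w i * u i * v i := rfl

theorem isSymm_weightedBilinForm (w : ι → R) : (weightedBilinForm w).IsSymm :=
  ⟨fun u v => by simp only [weightedBilinForm_apply, mul_right_comm]⟩

theorem isSelfAdjoint_weightedBilinForm_diagonal [DecidableEq ι] (w z : ι → R) :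
    (weightedBilinForm w).IsSelfAdjoint (Matrix.diagonal z).mulVecLin := fun u v => by
  simp only [weightedBilinForm_apply, mulVecLin_apply, mulVec_diagonal]
  exact Finset.sum_congr rfl fun i _ => by ring

end WeightedBilinForm

/-- Complex-orthogonality of vectors produced by the complex
orthogonalization process with respect to the bilinear form
`[u, v]_w = ∑ i, w i * u i * v i`. The conventions `q_{-1} = 0` and `β_0 = 0`
are encoded via truncated subtraction on `ℕ` together with `β 0 = 0`. -/
theorem complex_orthogonalization_orthogonal
    (m n : ℕ) (hn : 1 ≤ n) (hnm : n ≤ m - 1)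
    (z w : Fin m → ℂ) (q : ℕ → Fin m → ℂ) (α β : ℕ → ℂ)
    (hβ0 : β 0 = 0)
    (hnorm : ∀ j, j ≤ n → ∑ i, w i * q j i * q j i = 1)
    (hα : ∀ j, j + 1 ≤ n →
      α (j + 1) = ∑ i, w i * q j i * ((Matrix.diagonal z *ᵥ q j) i))
    (hrec : ∀ j, j + 1 ≤ n →
      Matrix.diagonal z *ᵥ q j
        = β j • q (j - 1) + α (j + 1) • q j + β (j + 1) • q (j + 1))
    (hβ : ∀ j, 1 ≤ j → j ≤ n → β j ≠ 0) :
    ∀ i, i ≤ n → ∀ j, j ≤ n → i ≠ j → ∑ k, w k * q i k * q j k = 0 := by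
  intro i hi j hj hij
  exact complex_orthogonalization_orthogonal_general (isSymm_weightedBilinForm w)
    (isSelfAdjoint_weightedBilinForm_diagonal w z) ⟨hβ0, hnorm, hα, hrec⟩
    (fun j h1 hjn => (IsRegular.of_ne_zero (hβ j h1 hjn)).left) hi hj hij
end

section
/- Let n ≥ 1, α_1, ..., α_n ∈ ℂ, β_1, ..., β_n ∈ ℂ with β_j ≠ 0 for all j, and let P_0, P_1, ..., P_n ∈ ℂ[z] satisfy P_0 = k for a nonzero constant k ∈ ℂ and the three-term recurrence z·P_j(z) = β_j P_{j-1}(z) + α_{j+1} P_j(z) + β_{j+1} P_{j+1}(z) for 0 ≤ j ≤ n-1, with the conventions P_{-1} = 0 and β_0 = 0. Let c_0, ..., c_n ∈ ℂ with c_n ≠ 0, let p(z) = Σ_{j=0}^n c_j P_j(z), and let C = A + e_n q^T be the generalized colleague matrix. If λ ∈ ℂ is an eigenvalue of C (i.e. there exists a nonzero v ∈ ℂ^n with C v = λ v), then p(λ) = 0. -/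
open Matrix BigOperators

/-!
Set `w_n := -(∑_{j<n} c_j v_j) / c_n`. The rank-one term of `C = A + e_n qᵀ` adds exactly
`β_n w_n` to the last row of `A v`, so `C v = λ v` says that `(v_0, …, v_{n-1}, w_n)` solves the
three-term recurrence at `λ`, as does `(P_0(λ), …, P_n(λ))`. A solution is determined by its initial
value because the `β_j` do not vanish, so the two are proportional, and `∑ c_j w_j = 0` forces
`∑ c_j P_j(λ) = 0`.
-/

section ThreeTerm

variable {R : Type*} [CommRing R]

/-- The sequences `x` satisfying the three-term recurrence
`z x_j = β_j x_{j-1} + α_{j+1} x_j + β_{j+1} x_{j+1}` for `0 ≤ j < n`. Since `0 - 1 = 0` in `ℕ`,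
the row `j = 0` agrees with the convention `x_{-1} = 0` when `β 0 = 0`. -/
def threeTermSolutions (α β : ℕ → R) (n : ℕ) (z : R) : Submodule R (ℕ → R) where
  carrier := {x | ∀ j < n,
    z * x j = β j * x (j - 1) + α (j + 1) * x j + β (j + 1) * x (j + 1)}
  zero_mem' := by simp
  add_mem' {x y} hx hy j hj := by
    simp only [Pi.add_apply]
    linear_combination hx j hj + hy j hj
  smul_mem' a x hx j hj := by
    simp only [Pi.smul_apply, smul_eq_mul]
    linear_combination a * hx j hj

variable {α β : ℕ → R} {n : ℕ} {z : R}

theorem eval_mem_threeTermSolutions {P : ℕ → Polynomial R}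
    (hP : ∀ j < n, Polynomial.X * P j = Polynomial.C (β j) * P (j - 1)
      + Polynomial.C (α (j + 1)) * P j + Polynomial.C (β (j + 1)) * P (j + 1)) :
    (fun j => (P j).eval z) ∈ threeTermSolutions α β n z := fun j hj => by
  simpa using congrArg (Polynomial.eval z) (hP j hj)

theorem eq_zero_of_mem_threeTermSolutions [NoZeroDivisors R] (hβ : ∀ j, 1 ≤ j → j ≤ n → β j ≠ 0)
    {x : ℕ → R} (hx : x ∈ threeTermSolutions α β n z) (hx0 : x 0 = 0) {i : ℕ} (hi : i ≤ n) :
    x i = 0 := by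
  induction i using Nat.strong_induction_on with
  | _ i ih =>
    rcases i with _ | i
    · exact hx0
    · have hstep := hx i hi
      rw [ih i (by lia) (by lia), ih (i - 1) (by lia) (by lia)] at hstep
      have hmul : β (i + 1) * x (i + 1) = 0 := by linear_combination -hstep
      exact (mul_eq_zero.mp hmul).resolve_left (hβ (i + 1) (by lia) hi)

theorem mul_eq_mul_of_mem_threeTermSolutions [NoZeroDivisors R]
    (hβ : ∀ j, 1 ≤ j → j ≤ n → β j ≠ 0) {x y : ℕ → R} (hx : x ∈ threeTermSolutions α β n z)
    (hy : y ∈ threeTermSolutions α β n z) {i : ℕ} (hi : i ≤ n) : x 0 * y i = y 0 * x i := by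
  have hdiff : x 0 • y - y 0 • x ∈ threeTermSolutions α β n z :=
    sub_mem (Submodule.smul_mem _ _ hy) (Submodule.smul_mem _ _ hx)
  exact sub_eq_zero.mp (eq_zero_of_mem_threeTermSolutions hβ hdiff (by simp [mul_comm]) hi)

end ThreeTerm

section Jacobi

variable {R : Type*} [NonUnitalNonAssocSemiring R] {α β : ℕ → R} {n : ℕ}

/-- The `(i, j)` entry of the infinite symmetric tridiagonal (Jacobi) matrix with diagonal
`α_1, α_2, …` and off-diagonals `β_1, β_2, …`; rows and columns are numbered from `0`. -/
def jacobiEntry {R : Type*} [Zero R] (α β : ℕ → R) (i j : ℕ) : R :=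
  if i = j then α (i + 1)
  else if i + 1 = j then β (i + 1)
  else if j + 1 = i then β (j + 1)
  else 0

theorem jacobiEntry_eq_add (hβ0 : β 0 = 0) (i j : ℕ) :
    jacobiEntry α β i j = (if i - 1 = j then β i else 0) + (if i = j then α (i + 1) else 0)
      + (if i + 1 = j then β (i + 1) else 0) := by
  unfold jacobiEntry
  rcases i with _ | i <;> grind

theorem sum_jacobiEntry_mul (hβ0 : β 0 = 0) (x : ℕ → R) {i : ℕ} (hi : i < n) :
    ∑ j ∈ Finset.range (n + 1), jacobiEntry α β i j * x j
      = β i * x (i - 1) + α (i + 1) * x i + β (i + 1) * x (i + 1) := by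
  have hpred : i - 1 < n + 1 := by lia
  have hself : i < n + 1 := by lia
  simp only [jacobiEntry_eq_add hβ0, add_mul, ite_mul, zero_mul, Finset.sum_add_distrib,
    Finset.sum_ite_eq, Finset.mem_range, hpred, hself, Nat.add_lt_add_iff_right, hi, if_true]

/-- The `n × n` leading section `A` of the infinite Jacobi matrix. -/
def jacobiMatrix {R : Type*} [Zero R] (α β : ℕ → R) (n : ℕ) : Matrix (Fin n) (Fin n) R :=
  Matrix.of fun i j => jacobiEntry α β i j

theorem jacobiMatrix_mulVec_add_last (hβ0 : β 0 = 0) (x : ℕ → R) (i : Fin n) :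
    (jacobiMatrix α β n *ᵥ fun j => x j) i + (if (i : ℕ) = n - 1 then β n * x n else 0)
      = β i * x (i - 1) + α (i + 1) * x i + β (i + 1) * x (i + 1) := by
  have hlast : jacobiEntry α β i n * x n = if (i : ℕ) = n - 1 then β n * x n else 0 := by
    unfold jacobiEntry
    grind [zero_mul]
  rw [← sum_jacobiEntry_mul hβ0 x i.isLt, Finset.sum_range_succ, hlast,
    ← Fin.sum_univ_eq_sum_range (fun j => jacobiEntry α β i j * x j)]
  rfl

end Jacobi

section Colleague

variable {K : Type*} [Field K] {α β c : ℕ → K} {n : ℕ} {z : K}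

/-- The generalized colleague matrix `C = A + e_n qᵀ` with `q_j = -β_n c_j / c_n`; with indices
starting at `0`, the entry `1` of `e_n` sits at `n - 1`. -/
def colleagueMatrix (α β c : ℕ → K) (n : ℕ) : Matrix (Fin n) (Fin n) K :=
  jacobiMatrix α β n + Matrix.vecMulVec (fun i : Fin n => if (i : ℕ) = n - 1 then 1 else 0)
    (fun j : Fin n => -β n * (c j / c n))

theorem exists_extension_sum_eq_zero (hc : c n ≠ 0) (v : Fin n → K) :
    ∃ w : ℕ → K, (fun i : Fin n => w i) = v ∧ ∑ j ∈ Finset.range (n + 1), c j * w j = 0 := by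
  let w : ℕ → K := fun i => if h : i < n then v ⟨i, h⟩ else -(∑ j : Fin n, c j * v j) / c n
  have hwv : ∀ i : Fin n, w i = v i := fun i => dif_pos i.isLt
  have hwn : w n = -(∑ j : Fin n, c j * v j) / c n := dif_neg (lt_irrefl n)
  refine ⟨w, funext hwv, ?_⟩
  rw [Finset.sum_range_succ, ← Fin.sum_univ_eq_sum_range (fun j => c j * w j), hwn,
    mul_div_cancel₀ _ hc]
  simp only [hwv, add_neg_cancel]

theorem dotProduct_eq_of_sum_eq_zero (hc : c n ≠ 0) {w : ℕ → K}
    (hw : ∑ j ∈ Finset.range (n + 1), c j * w j = 0) (b : K) :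
    (fun j : Fin n => -b * (c j / c n)) ⬝ᵥ (fun j => w j) = b * w n := by
  rw [Finset.sum_range_succ, ← Fin.sum_univ_eq_sum_range (fun j => c j * w j)] at hw
  calc (fun j : Fin n => -b * (c j / c n)) ⬝ᵥ (fun j => w j)
      = -b / c n * ∑ j : Fin n, c j * w j := by
        rw [dotProduct, Finset.mul_sum]
        exact Finset.sum_congr rfl fun j _ => by ring
    _ = b * w n := by
        rw [eq_neg_of_add_eq_zero_left hw]
        field_simp

theorem mem_threeTermSolutions_of_colleagueMatrix_mulVec (hβ0 : β 0 = 0) (hc : c n ≠ 0)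
    {w : ℕ → K} (hw : ∑ j ∈ Finset.range (n + 1), c j * w j = 0)
    (heig : (colleagueMatrix α β c n *ᵥ fun j => w j) = z • fun j : Fin n => w j) :
    w ∈ threeTermSolutions α β n z := fun i hi => by
  have hrow := congrFun heig ⟨i, hi⟩
  rw [colleagueMatrix, Matrix.add_mulVec, Matrix.vecMulVec_mulVec,
    dotProduct_eq_of_sum_eq_zero hc hw] at hrow
  rw [← jacobiMatrix_mulVec_add_last hβ0 w ⟨i, hi⟩]
  simpa using hrow.symm

theorem colleague_matrix_eigenvalue_is_root_general (hβ0 : β 0 = 0)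
    (hβ : ∀ j, 1 ≤ j → j ≤ n → β j ≠ 0) {P : ℕ → Polynomial K}
    (hrec : ∀ j < n, Polynomial.X * P j = Polynomial.C (β j) * P (j - 1)
      + Polynomial.C (α (j + 1)) * P j + Polynomial.C (β (j + 1)) * P (j + 1))
    (hc : c n ≠ 0) {v : Fin n → K} (hv : v ≠ 0) (heig : colleagueMatrix α β c n *ᵥ v = z • v) :
    (∑ j ∈ Finset.range (n + 1), Polynomial.C (c j) * P j).eval z = 0 := by
  obtain ⟨w, rfl, hsum⟩ := exists_extension_sum_eq_zero hc v
  have hw : w ∈ threeTermSolutions α β n z :=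
    mem_threeTermSolutions_of_colleagueMatrix_mulVec hβ0 hc hsum heig
  have hw0 : w 0 ≠ 0 := fun h0 =>
    hv (funext fun i => eq_zero_of_mem_threeTermSolutions hβ hw h0 i.isLt.le)
  have hprop : ∀ j ∈ Finset.range (n + 1), w 0 * (P j).eval z = (P 0).eval z * w j :=
    fun j hj => mul_eq_mul_of_mem_threeTermSolutions hβ hw (eval_mem_threeTermSolutions hrec)
      (Finset.mem_range_succ_iff.mp hj)
  refine (mul_eq_zero.mp ?_).resolve_left hw0
  calc w 0 * (∑ j ∈ Finset.range (n + 1), Polynomial.C (c j) * P j).eval z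
      = ∑ j ∈ Finset.range (n + 1), c j * (w 0 * (P j).eval z) := by
        simp only [Polynomial.eval_finsetSum, Polynomial.eval_C_mul, Finset.mul_sum,
          mul_left_comm]
    _ = ∑ j ∈ Finset.range (n + 1), c j * ((P 0).eval z * w j) :=
        Finset.sum_congr rfl fun j hj => by rw [hprop j hj]
    _ = (P 0).eval z * ∑ j ∈ Finset.range (n + 1), c j * w j := by
        simp only [Finset.mul_sum, mul_left_comm]
    _ = 0 := by rw [hsum, mul_zero]

end Colleague

/-- Every eigenvalue of the generalized colleague matrix
`C = A + e_n qᵀ` is a root of `p = ∑ c_j P_j`. -/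
theorem colleague_matrix_eigenvalue_is_root
    (n : ℕ) (hn : 1 ≤ n) (α β : ℕ → ℂ) (hβ0 : β 0 = 0)
    (hβ : ∀ j, 1 ≤ j → j ≤ n → β j ≠ 0)
    (P : ℕ → Polynomial ℂ) (k : ℂ) (hk : k ≠ 0) (hP0 : P 0 = Polynomial.C k)
    (hrec : ∀ j, j + 1 ≤ n →
      Polynomial.X * P j
        = Polynomial.C (β j) * P (j - 1) + Polynomial.C (α (j + 1)) * P j
          + Polynomial.C (β (j + 1)) * P (j + 1))
    (c : ℕ → ℂ) (hc : c n ≠ 0)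
    (p : Polynomial ℂ)
    (hp : p = ∑ j ∈ Finset.range (n + 1), Polynomial.C (c j) * P j)
    (A : Matrix (Fin n) (Fin n) ℂ)
    (hA : A = Matrix.of fun i j : Fin n =>
      if (i : ℕ) = (j : ℕ) then α ((i : ℕ) + 1)
      else if (i : ℕ) + 1 = (j : ℕ) then β ((i : ℕ) + 1)
      else if (j : ℕ) + 1 = (i : ℕ) then β ((j : ℕ) + 1)
      else 0)
    (e : Fin n → ℂ) (he : e = fun i : Fin n => if (i : ℕ) = n - 1 then 1 else 0)
    (qv : Fin n → ℂ) (hqv : qv = fun j : Fin n => -β n * (c (j : ℕ) / c n))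
    (Cmat : Matrix (Fin n) (Fin n) ℂ) (hC : Cmat = A + Matrix.vecMulVec e qv)
    (lam : ℂ) (v : Fin n → ℂ) (hv : v ≠ 0) (heig : Cmat *ᵥ v = lam • v) :
    p.eval lam = 0 := by
  subst hp hA he hqv hC
  exact colleague_matrix_eigenvalue_is_root_general hβ0 hβ hrec hc hv heig
end
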